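/- Let A and B be n×n complex matrices with rank(B) ≥ rank(A), Ind(A) = k, Ind(B) = t, rank(A^k) = rank((A^k)~ A^k), and rank(B^t) = rank((B^t)~ B^t). Let A = Â₁ + Â₂ and B = B̂₁ + B̂₂ be the m-core-EP decompositions of A and B. Then A ≤Ⓔ B if and only if Â₁ ≤ⓜ B̂₁. -/

import Mathlib

/-!
Only the core part of each decomposition matters. Write `A = A₁ + A₂` for an m-core-EP
decomposition. Since `A₂ A₁ = 0` and `A₂ ^ k = 0`, the power `A ^ k` has the form `A₁ U`, while
`rank (A₁²) = rank A₁` gives `A₁ = A₁² Z`, hence `A₁ = A ^ k A₁ Z ^ k`; so `A ^ k` and `A₁` have the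
same column space, and from this the m-core-EP inverses of `A` are exactly the m-core inverses of
`A₁` (`isMCoreEP_iff_isMCore`).

Let `X` be such an inverse. It has the form `A₁ V` and, because `A₁ X` is its own Minkowski adjoint,
also the form `W A₁~`. Hence `A₂ X = 0 = X A₂`, so `X A = X A₁` and `A X = A₁ X`. If moreover
`A₁ = B₁ V` for some `V`, then `B₂ A₁ = 0` and `A₁~ B₂ = 0`, so likewise `X B = X B₁` and
`B X = B₁ X`, and the two orders impose the same equations. Finally, each of the two orders does
force `A₁` to factor through `B₁`: the m-core order because `A₁ = A₁ X A₁ = B₁ X A₁`, and the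
m-core-EP order because `X = A₁ X² = B X²` iterates to `X = B ^ t X ^ (t + 1)`, with `B ^ t` of the
form `B₁ U`, and `A₁ = X A₁²`.
-/

open Matrix

noncomputable section

/-- The Minkowski metric matrix `G = diag(1, -1, …, -1)`. -/
def mink (n : ℕ) : Matrix (Fin n) (Fin n) ℂ :=
  Matrix.diagonal (fun i => if (i : ℕ) = 0 then 1 else -1)

/-- The Minkowski adjoint `A~ = G A* G`. -/
def madj {n : ℕ} (A : Matrix (Fin n) (Fin n) ℂ) : Matrix (Fin n) (Fin n) ℂ :=
  mink n * Aᴴ * mink n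

/-- `k` is the index of `A`: the smallest positive integer with
`rank (A^(k+1)) = rank (A^k)`. -/
def IsInd {n : ℕ} (A : Matrix (Fin n) (Fin n) ℂ) (k : ℕ) : Prop :=
  0 < k ∧ (A ^ (k + 1)).rank = (A ^ k).rank ∧
    ∀ j, 0 < j → (A ^ (j + 1)).rank = (A ^ j).rank → k ≤ j

/-- `X` is an m-core-EP inverse of `A` (with `Ind(A) = k`). -/
def IsMCoreEP {n : ℕ} (A X : Matrix (Fin n) (Fin n) ℂ) (k : ℕ) : Prop :=
  X * A * X = X ∧ X * A ^ (k + 1) = A ^ k ∧ madj (A * X) = A * X ∧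
    ∃ Z : Matrix (Fin n) (Fin n) ℂ, X = A ^ k * Z

/-- `Y` is an m-core inverse of `B`. -/
def IsMCore {n : ℕ} (B Y : Matrix (Fin n) (Fin n) ℂ) : Prop :=
  B * Y * B = B ∧ B * Y ^ 2 = Y ∧ madj (B * Y) = B * Y

/-- `A = A₁ + A₂` is an m-core-EP decomposition of `A` (with `Ind(A) = k`). -/
def IsMCoreEPDecomp {n : ℕ} (A A₁ A₂ : Matrix (Fin n) (Fin n) ℂ) (k : ℕ) : Prop :=
  A = A₁ + A₂ ∧ (A₁ ^ 2).rank = A₁.rank ∧ (madj A₁ * A₁).rank = A₁.rank ∧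
    A₂ ^ k = 0 ∧ madj A₁ * A₂ = 0 ∧ A₂ * A₁ = 0

/-- The m-core-EP order `A ≤Ⓔ B` (for `A` with `Ind(A) = k`): the m-core-EP
inverse `X` of `A` exists and satisfies `X A = X B` and `A X = B X`. -/
def MCoreEPLE {n : ℕ} (A B : Matrix (Fin n) (Fin n) ℂ) (k : ℕ) : Prop :=
  ∃ X, IsMCoreEP A X k ∧ X * A = X * B ∧ A * X = B * X

/-- The m-core order `C ≤ⓜ D`: the m-core inverse `Y` of `C` exists and
satisfies `Y C = Y D` and `C Y = D Y`. -/
def MCoreLE {n : ℕ} (C D : Matrix (Fin n) (Fin n) ℂ) : Prop :=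
  ∃ Y, IsMCore C Y ∧ Y * C = Y * D ∧ C * Y = D * Y

lemma mink_mul_mink (n : ℕ) : mink n * mink n = 1 := by
  rw [mink, diagonal_mul_diagonal, ← diagonal_one]
  congr 1
  ext i
  split_ifs <;> simp

lemma madj_mul {n : ℕ} (A B : Matrix (Fin n) (Fin n) ℂ) :
    madj (A * B) = madj B * madj A := by
  have h : mink n * Bᴴ * mink n * (mink n * Aᴴ * mink n)
      = mink n * Bᴴ * (mink n * mink n) * Aᴴ * mink n := by simp only [mul_assoc]
  rw [madj, madj, madj, h, mink_mul_mink, conjTranspose_mul]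
  simp only [mul_assoc, mul_one]

/-- Equality of ranks makes the column spaces of `C` and `C²` coincide. -/
lemma exists_eq_sq_mul {n : ℕ} {C : Matrix (Fin n) (Fin n) ℂ}
    (h : (C ^ 2).rank = C.rank) : ∃ Z, C = C ^ 2 * Z := by
  have hle : LinearMap.range (C ^ 2).mulVecLin ≤ LinearMap.range C.mulVecLin := by
    rintro _ ⟨v, rfl⟩
    exact ⟨C *ᵥ v, by simp [pow_two]⟩
  have heq := Submodule.eq_of_le_of_finrank_eq hle h
  have hcol : ∀ j, ∃ v, (C ^ 2) *ᵥ v = C *ᵥ Pi.single j 1 := fun j => by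
    have : C *ᵥ Pi.single j 1 ∈ LinearMap.range (C ^ 2).mulVecLin := by
      rw [heq]
      exact ⟨_, rfl⟩
    exact this
  choose f hf using hcol
  refine ⟨Matrix.of fun i j => f j i, ?_⟩
  ext i j
  have := congrFun (hf j) i
  rw [mulVec_single_one] at this
  exact this.symm

/-- Equality of ranks makes the row spaces of `C` and `C²` coincide. -/
lemma exists_eq_mul_sq {n : ℕ} {C : Matrix (Fin n) (Fin n) ℂ}
    (h : (C ^ 2).rank = C.rank) : ∃ W, C = W * C ^ 2 := by
  have h' : (Cᵀ ^ 2).rank = Cᵀ.rank := by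
    rw [← transpose_pow, rank_transpose, rank_transpose, h]
  obtain ⟨Z, hZ⟩ := exists_eq_sq_mul h'
  refine ⟨Zᵀ, ?_⟩
  have := congrArg transpose hZ
  simpa [transpose_mul, transpose_pow] using this

lemma exists_eq_pow_mul {n : ℕ} {C Z : Matrix (Fin n) (Fin n) ℂ} (h : C = C ^ 2 * Z) (m : ℕ) :
    C = C ^ (m + 1) * Z ^ m := by
  induction m with
  | zero => simp
  | succ m ih =>
    calc C = C ^ (m + 1) * Z ^ m := ih
      _ = C ^ m * C * Z ^ m := by rw [pow_succ]
      _ = C ^ m * (C ^ 2 * Z) * Z ^ m := by rw [← h]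
      _ = C ^ (m + 1 + 1) * Z ^ (m + 1) := by
        rw [pow_succ' Z, ← mul_assoc, ← mul_assoc, ← pow_add]

lemma add_pow_eq {n : ℕ} {P Q : Matrix (Fin n) (Fin n) ℂ} (h : Q * P = 0) (m : ℕ) :
    ∃ U, (P + Q) ^ m = P * U + Q ^ m := by
  induction m with
  | zero => exact ⟨0, by simp⟩
  | succ m ih =>
    obtain ⟨U, hU⟩ := ih
    refine ⟨P * U + Q ^ m, ?_⟩
    rw [pow_succ', hU, add_mul, mul_add Q, ← mul_assoc Q, h, zero_mul, zero_add, ← pow_succ']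

lemma add_pow_mul_eq {n : ℕ} {P Q : Matrix (Fin n) (Fin n) ℂ} (h : Q * P = 0) (m : ℕ) :
    (P + Q) ^ m * P = P ^ (m + 1) := by
  induction m with
  | zero => simp
  | succ m ih =>
    rw [pow_succ', mul_assoc, ih, add_mul, pow_succ' P m, ← mul_assoc Q, h, zero_mul,
      add_zero, ← pow_succ', ← pow_succ']

lemma eq_pow_mul_of_eq_mul_sq {n : ℕ} {B X : Matrix (Fin n) (Fin n) ℂ} (h : X = B * X ^ 2)
    (m : ℕ) : X = B ^ m * X ^ (m + 1) := by
  induction m with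
  | zero => simp
  | succ m ih =>
    calc X = B ^ m * (X * X ^ m) := by rw [← pow_succ']; exact ih
      _ = B ^ m * (B * X ^ 2 * X ^ m) := by rw [← h]
      _ = B ^ (m + 1) * X ^ (m + 1 + 1) := by
        rw [pow_succ B, mul_assoc B, ← pow_add, mul_assoc, show 2 + m = m + 1 + 1 by omega]

/-- Here `C (Y C²) = C C`, and `C` is injective on its column space by the rank condition (in the
form `C = W C²`); the columns of both `Y C²` and `C` lie there because `Y = C Y²`. -/
lemma IsMCore.mul_sq {n : ℕ} {C Y : Matrix (Fin n) (Fin n) ℂ} (h : IsMCore C Y)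
    (hr : (C ^ 2).rank = C.rank) : Y * C ^ 2 = C := by
  obtain ⟨W, hW⟩ := exists_eq_mul_sq hr
  calc Y * C ^ 2 = C * Y ^ 2 * C ^ 2 := by rw [h.2.1]
    _ = W * C ^ 2 * Y ^ 2 * C ^ 2 := by rw [← hW]
    _ = W * C * (C * Y ^ 2) * C ^ 2 := by simp only [pow_two, mul_assoc]
    _ = W * (C * Y * C) * C := by rw [h.2.1]; simp only [pow_two, mul_assoc]
    _ = C := by rw [h.1, mul_assoc, ← pow_two, ← hW]

lemma IsMCore.mul_mul {n : ℕ} {C Y : Matrix (Fin n) (Fin n) ℂ} (h : IsMCore C Y)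
    (hr : (C ^ 2).rank = C.rank) : Y * C * Y = Y :=
  calc Y * C * Y = Y * C * (C * Y ^ 2) := by rw [h.2.1]
    _ = Y * C ^ 2 * Y ^ 2 := by simp only [pow_two, mul_assoc]
    _ = Y := by rw [h.mul_sq hr, h.2.1]

/-- If `Y = Y C Y` with `C Y` Minkowski self-adjoint, then `Y = Y Y~ C~`, so `Y` kills whatever
`C~` kills. -/
lemma mul_eq_zero_of_madj {n : ℕ} {C Y N : Matrix (Fin n) (Fin n) ℂ} (h : Y * C * Y = Y)
    (hs : madj (C * Y) = C * Y) (hN : madj C * N = 0) : Y * N = 0 :=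
  calc Y * N = Y * (C * Y) * N := by rw [← mul_assoc Y, h]
    _ = Y * (madj Y * (madj C * N)) := by rw [← hs, madj_mul]; simp only [mul_assoc]
    _ = 0 := by rw [hN, mul_zero, mul_zero]

lemma IsMCore.mul_eq_zero {n : ℕ} {C Y N : Matrix (Fin n) (Fin n) ℂ} (h : IsMCore C Y)
    (hN : N * C = 0) : N * Y = 0 := by
  rw [← h.2.1, ← mul_assoc, hN, zero_mul]

/-- The m-core-EP inverses of `A` are the m-core inverses of its core part `A₁`. -/
lemma isMCoreEP_iff_isMCore {n k : ℕ} {A A₁ A₂ X : Matrix (Fin n) (Fin n) ℂ}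
    (hd : IsMCoreEPDecomp A A₁ A₂ k) : IsMCoreEP A X k ↔ IsMCore A₁ X := by
  obtain ⟨rfl, hr, -, hnil, horth, h21⟩ := hd
  obtain ⟨U, hU⟩ := add_pow_eq h21 k
  rw [hnil, add_zero] at hU
  constructor
  · rintro ⟨h1, h2, h3, Z, hX⟩
    have hXU : X = A₁ * (U * Z) := by rw [hX, hU, mul_assoc]
    have h2X : A₂ * X = 0 := by rw [hXU, ← mul_assoc, h21, zero_mul]
    have hAX : (A₁ + A₂) * X = A₁ * X := by rw [add_mul, h2X, add_zero]
    rw [mul_assoc, hAX, ← mul_assoc] at h1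
    rw [hAX] at h3
    have hX2 : X * A₂ = 0 := mul_eq_zero_of_madj h1 h3 horth
    obtain ⟨Z', hZ'⟩ := exists_eq_sq_mul hr
    have hA₁ : A₁ = (A₁ + A₂) ^ k * (A₁ * Z' ^ k) := by
      rw [← mul_assoc, add_pow_mul_eq h21]
      exact exists_eq_pow_mul hZ' k
    have hXA : X * (A₁ + A₂) = X * A₁ := by rw [mul_add, hX2, add_zero]
    have hsq : X * A₁ ^ 2 = A₁ := by
      calc X * A₁ ^ 2 = X * (A₁ + A₂) * A₁ := by rw [hXA, pow_two, mul_assoc]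
        _ = X * (A₁ + A₂) * ((A₁ + A₂) ^ k * (A₁ * Z' ^ k)) := by rw [← hA₁]
        _ = X * (A₁ + A₂) ^ (k + 1) * (A₁ * Z' ^ k) := by
          rw [pow_succ' _ k]; simp only [mul_assoc]
        _ = A₁ := by rw [h2, ← hA₁]
    have hinner : A₁ * X * A₁ = A₁ := by
      calc A₁ * X * A₁ = A₁ * X * (A₁ ^ 2 * Z') := by rw [← hZ']
        _ = A₁ * (X * A₁ ^ 2) * Z' := by simp only [mul_assoc]
        _ = A₁ := by rw [hsq, ← pow_two, ← hZ']
    refine ⟨hinner, ?_, h3⟩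
    calc A₁ * X ^ 2 = A₁ * X * X := by rw [pow_two, mul_assoc]
      _ = A₁ * X * (A₁ * (U * Z)) := by rw [← hXU]
      _ = X := by rw [← mul_assoc, hinner, ← hXU]
  · intro h
    have hAX : (A₁ + A₂) * X = A₁ * X := by rw [add_mul, h.mul_eq_zero h21, add_zero]
    have hXA : X * (A₁ + A₂) = X * A₁ := by
      rw [mul_add, mul_eq_zero_of_madj (h.mul_mul hr) h.2.2 horth, add_zero]
    refine ⟨?_, ?_, ?_, X ^ (k + 1), ?_⟩
    · rw [hXA, h.mul_mul hr]
    · rw [pow_succ', ← mul_assoc, hXA, hU, ← mul_assoc, mul_assoc X, ← pow_two, h.mul_sq hr]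
    · rw [hAX, h.2.2]
    · refine eq_pow_mul_of_eq_mul_sq ?_ k
      rw [pow_two, ← mul_assoc, hAX, mul_assoc, ← pow_two, h.2.1]

/-- `A ≤Ⓔ B` iff `Â₁ ≤ⓜ B̂₁` for the m-core-EP decompositions
`A = Â₁ + Â₂` and `B = B̂₁ + B̂₂`. -/
theorem mCoreEPLE_iff_mCoreLE {n k t : ℕ} (A B A₁ A₂ B₁ B₂ : Matrix (Fin n) (Fin n) ℂ)
    (hrank : A.rank ≤ B.rank) (hk : IsInd A k) (ht : IsInd B t)
    (hrkA : (A ^ k).rank = (madj (A ^ k) * A ^ k).rank)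
    (hrkB : (B ^ t).rank = (madj (B ^ t) * B ^ t).rank)
    (hdecA : IsMCoreEPDecomp A A₁ A₂ k)
    (hdecB : IsMCoreEPDecomp B B₁ B₂ t) :
    MCoreEPLE A B k ↔ MCoreLE A₁ B₁ := by
  have hrA := hdecA.2.1
  -- With `X` an m-core inverse of `A₁`, both orders are equations between `X`, `A₁` and `B` or `B₁`.
  have key : ∀ X, IsMCore A₁ X →
      ((X * A = X * B ∧ A * X = B * X) ↔ (X * A₁ = X * B₁ ∧ A₁ * X = B₁ * X)) := by
    intro X h
    obtain ⟨hA, -, -, -, horthA, h21A⟩ := hdecA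
    obtain ⟨hB, -, -, hnilB, horthB, h21B⟩ := hdecB
    have hXA : X * A = X * A₁ := by
      rw [hA, mul_add, mul_eq_zero_of_madj (h.mul_mul hrA) h.2.2 horthA, add_zero]
    have hAX : A * X = A₁ * X := by rw [hA, add_mul, h.mul_eq_zero h21A, add_zero]
    rw [hXA, hAX]
    have same : ∀ V, A₁ = B₁ * V → X * B = X * B₁ ∧ B * X = B₁ * X := by
      intro V hV
      have hl : B₂ * A₁ = 0 := by rw [hV, ← mul_assoc, h21B, zero_mul]
      have hm : madj A₁ * B₂ = 0 := by rw [hV, madj_mul, mul_assoc, horthB, mul_zero]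
      rw [hB, mul_add, add_mul, h.mul_eq_zero hl,
        mul_eq_zero_of_madj (h.mul_mul hrA) h.2.2 hm, add_zero, add_zero]
      exact ⟨rfl, rfl⟩
    constructor
    · rintro ⟨e1, e2⟩
      obtain ⟨U, hU⟩ := add_pow_eq h21B t
      rw [hnilB, add_zero, ← hB] at hU
      have hX : X = B * X ^ 2 := by rw [pow_two, ← mul_assoc, ← e2, mul_assoc, ← pow_two, h.2.1]
      have hV : A₁ = B₁ * (U * X ^ (t + 1) * A₁ ^ 2) := by
        rw [← mul_assoc, ← mul_assoc, ← hU, ← eq_pow_mul_of_eq_mul_sq hX t, h.mul_sq hrA]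
      obtain ⟨f1, f2⟩ := same _ hV
      exact ⟨e1.trans f1, e2.trans f2⟩
    · rintro ⟨e1, e2⟩
      have hV : A₁ = B₁ * (X * A₁) := by rw [← mul_assoc, ← e2, h.1]
      obtain ⟨f1, f2⟩ := same _ hV
      exact ⟨e1.trans f1.symm, e2.trans f2.symm⟩
  constructor
  · rintro ⟨X, hX, hXe⟩
    have h := (isMCoreEP_iff_isMCore hdecA).1 hX
    exact ⟨X, h, (key X h).1 hXe⟩
  · rintro ⟨X, h, hXe⟩
    exact ⟨X, (isMCoreEP_iff_isMCore hdecA).2 h, (key X h).2 hXe⟩
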